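/- arXiv:1906.01329 — 9 statements merged into one kernel-verified Lean document; each statement's English description precedes it below -/
import Mathlib

section
/- Suppose there is no nonzero element u of D such that N(c) = N(u)^2 (i.e., N(c) is not the square of a norm of a nonzero element). Then the multiplication of Cay(D,c,σ₁,σ₂,σ₃,σ₄) has no zero divisors: for all u, v, x, y ∈ D, if u·x + c·σ₁(v)·σ₂(y) = 0 and σ₃(u)·y + v·σ₄(x) = 0, then (u = 0 and v = 0) or (x = 0 and y = 0). In particular Cay(D,c,σ₁,σ₂,σ₃,σ₄) is a division algebra. -/
/-- Multiplication of the generalized Cayley–Dickson double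
`Cay(D, c, σ₁, σ₂, σ₃, σ₄)`:
`(u,v)·(x,y) = (u·x + c·σ₁(v)·σ₂(y), σ₃(u)·y + v·σ₄(x))`. -/
def cayMul {R : Type*} [Ring R] (c : R) (σ₁ σ₂ σ₃ σ₄ : R → R) :
    R × R → R × R → R × R :=
  fun p q => (p.1 * q.1 + c * σ₁ p.2 * σ₂ q.2, σ₃ p.1 * q.2 + p.2 * σ₄ q.1)

/-!
A product `(u, v) · (x, y) = 0` amounts to `u x = -(c σ₁(v) σ₂(y))` and `σ₃(u) y = -(v σ₄(x))`.
Taking norms of both equations and multiplying, the two signs cancel and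
`N(u)² N(x) N(y) = N(c) N(v)² N(x) N(y)`. If all four entries are nonzero, then
`N(c) = N(u v⁻¹)²` is a square; if one of them vanishes, the two equations alone force
`(u, v) = 0` or `(x, y) = 0`.
-/

section CayMul

variable {R : Type*} [Ring R] {c : R} {σ₁ σ₂ σ₃ σ₄ : R → R} {p q : R × R}

theorem cayMul_eq_zero_iff :
    cayMul c σ₁ σ₂ σ₃ σ₄ p q = 0 ↔
      p.1 * q.1 = -(c * σ₁ p.2 * σ₂ q.2) ∧ σ₃ p.1 * q.2 = -(p.2 * σ₄ q.1) := by
  simp only [cayMul, Prod.mk_eq_zero, add_eq_zero_iff_eq_neg]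

theorem eq_zero_or_eq_zero_or_coords_ne_zero_of_cayMul_eq_zero [NoZeroDivisors R] (hc : c ≠ 0)
    (hσ₁ : ∀ x, σ₁ x = 0 ↔ x = 0) (hσ₂ : ∀ x, σ₂ x = 0 ↔ x = 0)
    (hσ₃ : ∀ x, σ₃ x = 0 ↔ x = 0) (hσ₄ : ∀ x, σ₄ x = 0 ↔ x = 0)
    (h : cayMul c σ₁ σ₂ σ₃ σ₄ p q = 0) :
    p = 0 ∨ q = 0 ∨ (p.1 ≠ 0 ∧ p.2 ≠ 0 ∧ q.1 ≠ 0 ∧ q.2 ≠ 0) := by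
  obtain ⟨hfst, hsnd⟩ := cayMul_eq_zero_iff.1 h
  have fst_iff : p.1 = 0 ∨ q.1 = 0 ↔ p.2 = 0 ∨ q.2 = 0 := by
    rw [← mul_eq_zero, hfst]
    simp only [neg_eq_zero, mul_eq_zero, hc, hσ₁, hσ₂, false_or]
  have snd_iff : p.1 = 0 ∨ q.2 = 0 ↔ p.2 = 0 ∨ q.1 = 0 := by
    rw [← hσ₃ p.1, ← mul_eq_zero, hsnd]
    simp only [neg_eq_zero, mul_eq_zero, hσ₄]
  simp only [Prod.ext_iff, Prod.fst_zero, Prod.snd_zero]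
  tauto

theorem map_mul_sq_mul_eq_of_cayMul_eq_zero {M : Type*} [CommMonoid M] (N : R →* M)
    (hσ₁ : ∀ x, N (σ₁ x) = N x) (hσ₂ : ∀ x, N (σ₂ x) = N x)
    (hσ₃ : ∀ x, N (σ₃ x) = N x) (hσ₄ : ∀ x, N (σ₄ x) = N x)
    (h : cayMul c σ₁ σ₂ σ₃ σ₄ p q = 0) :
    N c * N p.2 ^ 2 * (N q.1 * N q.2) = N p.1 ^ 2 * (N q.1 * N q.2) := by
  obtain ⟨hfst, hsnd⟩ := cayMul_eq_zero_iff.1 h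
  calc N c * N p.2 ^ 2 * (N q.1 * N q.2)
      = N (c * σ₁ p.2 * σ₂ q.2) * N (p.2 * σ₄ q.1) := by
        simp only [map_mul, hσ₁, hσ₂, hσ₄, sq, mul_assoc, mul_left_comm, mul_comm]
    _ = N (-(c * σ₁ p.2 * σ₂ q.2)) * N (-(p.2 * σ₄ q.1)) := by
        rw [← map_mul, ← map_mul, neg_mul_neg]
    _ = N (p.1 * q.1) * N (σ₃ p.1 * q.2) := by rw [hfst, hsnd]
    _ = N p.1 ^ 2 * (N q.1 * N q.2) := by
        simp only [map_mul, hσ₃, sq, mul_left_comm, mul_comm]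

end CayMul

theorem map_eq_map_mul_inv_sq {G₀ M : Type*} [GroupWithZero G₀] [CommMonoid M] (N : G₀ →* M)
    {a b c : G₀} (hb : b ≠ 0) (h : N c * N b ^ 2 = N a ^ 2) : N c = N (a * b⁻¹) ^ 2 := by
  have isUnit_sq : IsUnit (N b ^ 2) := (hb.isUnit.map N).pow 2
  apply isUnit_sq.mul_right_cancel
  rw [h, ← mul_pow, ← map_mul, inv_mul_cancel_right₀ hb]

theorem cay_central_division_algebra_no_zero_divisors_general
    {D M₀ : Type*} [DivisionRing D] [CommMonoidWithZero M₀] [Nontrivial M₀] (N : D →*₀ M₀)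
    {σ₁ σ₂ σ₃ σ₄ : D → D} {c : D} (hc : c ≠ 0)
    (hσ₁ : ∀ x, N (σ₁ x) = N x) (hσ₂ : ∀ x, N (σ₂ x) = N x)
    (hσ₃ : ∀ x, N (σ₃ x) = N x) (hσ₄ : ∀ x, N (σ₄ x) = N x)
    (hcN : ¬ ∃ u : D, u ≠ 0 ∧ N c = N u ^ 2)
    {p q : D × D} (h : cayMul c σ₁ σ₂ σ₃ σ₄ p q = 0) : p = 0 ∨ q = 0 := by
  have eq_zero_iff {σ : D → D} (hσ : ∀ x, N (σ x) = N x) (x : D) : σ x = 0 ↔ x = 0 := by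
    rw [← map_eq_zero N, hσ, map_eq_zero]
  obtain hp | hq | ⟨hu, hv, hx, hy⟩ := eq_zero_or_eq_zero_or_coords_ne_zero_of_cayMul_eq_zero hc
    (eq_zero_iff hσ₁) (eq_zero_iff hσ₂) (eq_zero_iff hσ₃) (eq_zero_iff hσ₄) h
  · exact Or.inl hp
  · exact Or.inr hq
  · have isUnit_norms : IsUnit (N q.1 * N q.2) := (hx.isUnit.map N).mul (hy.isUnit.map N)
    have norm_eq : N c * N p.2 ^ 2 = N p.1 ^ 2 := isUnit_norms.mul_right_cancel
      (map_mul_sq_mul_eq_of_cayMul_eq_zero (N : D →* M₀) hσ₁ hσ₂ hσ₃ hσ₄ h)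
    exact absurd ⟨p.1 * p.2⁻¹, mul_ne_zero hu (inv_ne_zero hv),
      map_eq_map_mul_inv_sq (N : D →* M₀) hv norm_eq⟩ hcN

/-- A nondegenerate multiplicative norm form as a bundled homomorphism. That it preserves `1` is
derived: `N 1` is a nonzero idempotent. -/
def multiplicativeNormHom {R M₀ : Type*} [MulZeroOneClass R] [Nontrivial R] [MonoidWithZero M₀]
    [IsLeftCancelMulZero M₀] (N : R → M₀) (hNmul : ∀ x y, N (x * y) = N x * N y)
    (hNdeg : ∀ x, N x = 0 ↔ x = 0) : R →*₀ M₀ where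
  toFun := N
  map_zero' := (hNdeg 0).2 rfl
  map_one' := by
    have one_ne : N 1 ≠ 0 := mt (hNdeg 1).1 one_ne_zero
    exact (mul_eq_left₀ one_ne).1 (by rw [← hNmul, one_mul])
  map_mul' := hNmul

/-- If `N(c)` is not the square of the norm of a nonzero element of the
central division algebra `D`, then `Cay(D,c,σ₁,σ₂,σ₃,σ₄)` has no zero divisors,
hence is a division algebra. -/
theorem cay_central_division_algebra_no_zero_divisors
    {F D : Type*} [Field F] [DivisionRing D] [Algebra F D]
    [FiniteDimensional F D] [Algebra.IsCentral F D]
    (σ₁ σ₂ σ₃ σ₄ : D ≃ₐ[F] D) (c : D) (hc : c ≠ 0)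
    (N : D → F)
    (hNmul : ∀ x y : D, N (x * y) = N x * N y)
    (hNdeg : ∀ x : D, N x = 0 ↔ x = 0)
    (hNσ₁ : ∀ x : D, N (σ₁ x) = N x) (hNσ₂ : ∀ x : D, N (σ₂ x) = N x)
    (hNσ₃ : ∀ x : D, N (σ₃ x) = N x) (hNσ₄ : ∀ x : D, N (σ₄ x) = N x)
    (hcN : ¬ ∃ u : D, u ≠ 0 ∧ N c = (N u) ^ 2) :
    ∀ u v x y : D,
      u * x + c * σ₁ v * σ₂ y = 0 → σ₃ u * y + v * σ₄ x = 0 →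
        (u = 0 ∧ v = 0) ∨ (x = 0 ∧ y = 0) := by
  intro u v x y hfst hsnd
  simpa only [Prod.mk_eq_zero] using
    cay_central_division_algebra_no_zero_divisors_general (multiplicativeNormHom N hNmul hNdeg) hc
      hNσ₁ hNσ₂ hNσ₃ hNσ₄ hcN (p := (u, v)) (q := (x, y)) (Prod.ext hfst hsnd)
end

section
/- Suppose at least one of the following holds: σ₂ ∘ σ₄ ≠ id, or σ₁ ∘ σ₄ ≠ σ₂ ∘ σ₃, or σ₄ ∘ σ₁ ≠ σ₃ ∘ σ₂. Then an element (k,m) of Cay(K,c,σ₁,σ₂,σ₃,σ₄) lies in the left nucleus (i.e., ((k,m)·z)·w = (k,m)·(z·w) for all z, w in the algebra) if and only if m = 0 and σ₁(σ₃(k)) = k; that is, the left nucleus equals Fix(σ₁ ∘ σ₃) × {0}. -/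
/-!
If `(k, m)` lies in the left nucleus, testing associativity on pairs taken from `(x, 0)` and
`(0, y)` gives identities such as `c * σ₁ m * σ₂ (σ₄ x) = c * σ₁ m * x`. When `m ≠ 0` the common
left factor cancels, which forces all three relations `σ₂ ∘ σ₄ = id`, `σ₁ ∘ σ₄ = σ₂ ∘ σ₃` and
`σ₄ ∘ σ₁ = σ₃ ∘ σ₂`; so the failure of any one of them leaves only `m = 0`. For `m = 0`
associativity reduces to `c * σ₁ (σ₃ k) = k * c`, and over a field `c` cancels.
-/

/-- The left nucleus of a binary operation: the elements that associate in the leftmost position.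
The operation is passed explicitly because `cayMul` lives on the bare type `R × R`, which already
carries the componentwise product. -/
def leftNucleus {A : Type*} (mul : A → A → A) : Set A :=
  {a | ∀ z w, mul (mul a z) w = mul a (mul z w)}

section Ring

variable {R : Type*} [Ring R] {c k m : R} {σ₁ σ₂ σ₃ σ₄ : R →+* R}

theorem mul_map₂_map₄_eq_mul_of_mem_leftNucleus_cayMul
    (hkm : (k, m) ∈ leftNucleus (cayMul c σ₁ σ₂ σ₃ σ₄)) (x : R) :
    c * σ₁ m * σ₂ (σ₄ x) = c * σ₁ m * x := by
  simpa [cayMul] using (congrArg Prod.fst (hkm (0, 1) (x, 0))).symm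

theorem mul_map₁_map₄_eq_mul_map₂_map₃_of_mem_leftNucleus_cayMul
    (hkm : (k, m) ∈ leftNucleus (cayMul c σ₁ σ₂ σ₃ σ₄)) (x : R) :
    c * σ₁ m * σ₁ (σ₄ x) = c * σ₁ m * σ₂ (σ₃ x) := by
  simpa [cayMul, mul_assoc] using congrArg Prod.fst (hkm (x, 0) (0, 1))

theorem mul_map₄_map₁_eq_mul_map₃_map₂_of_mem_leftNucleus_cayMul
    (hkm : (k, m) ∈ leftNucleus (cayMul c σ₁ σ₂ σ₃ σ₄)) (y : R) :
    m * σ₄ c * σ₄ (σ₁ y) = m * σ₄ c * σ₃ (σ₂ y) := by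
  have map_eq : σ₃ (c * σ₁ m) = m * σ₄ c := by
    simpa [cayMul] using congrArg Prod.snd (hkm (0, 1) (0, 1))
  have map_mul_eq : σ₃ (c * σ₁ m * σ₂ y) = m * σ₄ (c * σ₁ y) := by
    simpa [cayMul] using congrArg Prod.snd (hkm (0, y) (0, 1))
  rw [map_mul, map_eq, map_mul, ← mul_assoc] at map_mul_eq
  exact map_mul_eq.symm

theorem mk_zero_mem_leftNucleus_cayMul_iff :
    (k, 0) ∈ leftNucleus (cayMul c σ₁ σ₂ σ₃ σ₄) ↔ c * σ₁ (σ₃ k) = k * c := by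
  refine ⟨fun hk => ?_, ?_⟩
  · simpa [cayMul] using congrArg Prod.fst (hk (0, 1) (0, 1))
  · rintro hk ⟨x, y⟩ ⟨s, t⟩
    ext
    · simp [cayMul, mul_add, ← mul_assoc, hk]
    · simp [cayMul, mul_add, mul_assoc]

variable [NoZeroDivisors R]

theorem comp_eq_of_mem_leftNucleus_cayMul_of_ne_zero (hc : c ≠ 0)
    (hσ₁ : Function.Injective σ₁) (hσ₄ : Function.Injective σ₄)
    (hkm : (k, m) ∈ leftNucleus (cayMul c σ₁ σ₂ σ₃ σ₄)) (hm : m ≠ 0) :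
    σ₂ ∘ σ₄ = id ∧ σ₁ ∘ σ₄ = σ₂ ∘ σ₃ ∧ σ₄ ∘ σ₁ = σ₃ ∘ σ₂ := by
  have hcm : c * σ₁ m ≠ 0 := mul_ne_zero hc ((map_ne_zero_iff σ₁ hσ₁).2 hm)
  have hmc : m * σ₄ c ≠ 0 := mul_ne_zero hm ((map_ne_zero_iff σ₄ hσ₄).2 hc)
  refine ⟨funext fun x => ?_, funext fun x => ?_, funext fun y => ?_⟩
  · exact mul_left_cancel₀ hcm (mul_map₂_map₄_eq_mul_of_mem_leftNucleus_cayMul hkm x)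
  · exact mul_left_cancel₀ hcm (mul_map₁_map₄_eq_mul_map₂_map₃_of_mem_leftNucleus_cayMul hkm x)
  · exact mul_left_cancel₀ hmc (mul_map₄_map₁_eq_mul_map₃_map₂_of_mem_leftNucleus_cayMul hkm y)

variable (σ₁ σ₂ σ₃ σ₄)

theorem cay_field_left_nucleus_general (hc : c ≠ 0)
    (hσ₁ : Function.Injective σ₁) (hσ₄ : Function.Injective σ₄)
    (h : σ₂ ∘ σ₄ ≠ id ∨ σ₁ ∘ σ₄ ≠ σ₂ ∘ σ₃ ∨ σ₄ ∘ σ₁ ≠ σ₃ ∘ σ₂) :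
    (k, m) ∈ leftNucleus (cayMul c σ₁ σ₂ σ₃ σ₄) ↔ m = 0 ∧ c * σ₁ (σ₃ k) = k * c := by
  refine ⟨fun hkm => ?_, ?_⟩
  · obtain rfl : m = 0 := by
      by_contra hm
      obtain ⟨h₂₄, h₁₄, h₄₁⟩ := comp_eq_of_mem_leftNucleus_cayMul_of_ne_zero hc hσ₁ hσ₄ hkm hm
      exact h.elim (· h₂₄) (·.elim (· h₁₄) (· h₄₁))
    exact ⟨rfl, mk_zero_mem_leftNucleus_cayMul_iff.1 hkm⟩
  · rintro ⟨rfl, hk⟩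
    exact mk_zero_mem_leftNucleus_cayMul_iff.2 hk

end Ring

/-- If `σ₂∘σ₄ ≠ id`, or `σ₁∘σ₄ ≠ σ₂∘σ₃`, or `σ₄∘σ₁ ≠ σ₃∘σ₂`, then the
left nucleus of `Cay(K,c,σ₁,σ₂,σ₃,σ₄)` is `Fix(σ₁∘σ₃) × {0}`. -/
theorem cay_field_left_nucleus
    {F K : Type*} [Field F] [Field K] [Algebra F K] [FiniteDimensional F K]
    (σ₁ σ₂ σ₃ σ₄ : K ≃ₐ[F] K) (c : K) (hc : c ≠ 0)
    (h : (⇑σ₂ ∘ ⇑σ₄ ≠ id) ∨ (⇑σ₁ ∘ ⇑σ₄ ≠ ⇑σ₂ ∘ ⇑σ₃) ∨ (⇑σ₄ ∘ ⇑σ₁ ≠ ⇑σ₃ ∘ ⇑σ₂))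
    (k m : K) :
    (∀ z w : K × K,
        cayMul c σ₁ σ₂ σ₃ σ₄ (cayMul c σ₁ σ₂ σ₃ σ₄ (k, m) z) w
          = cayMul c σ₁ σ₂ σ₃ σ₄ (k, m) (cayMul c σ₁ σ₂ σ₃ σ₄ z w)) ↔
      (m = 0 ∧ σ₁ (σ₃ k) = k) := by
  rw [← mul_right_inj' (b := σ₁ (σ₃ k)) hc, mul_comm c k]
  exact cay_field_left_nucleus_general (σ₁ : K →+* K) σ₂ σ₃ σ₄ hc σ₁.injective σ₄.injective h
end

section
/- Suppose at least one of the following holds: σ₂ ∘ σ₄ ≠ id, or σ₁ ∘ σ₄ ≠ σ₂ ∘ σ₃, or σ₄ ∘ σ₁ ≠ σ₃ ∘ σ₂. Then an element (k,m) of Cay(D,c,σ₁,σ₂,σ₃,σ₄) lies in the left nucleus (i.e., ((k,m)·z)·w = (k,m)·(z·w) for all z, w in the algebra) if and only if m = 0 and c·σ₁(σ₃(k)) = k·c; that is, the left nucleus equals {k ∈ D : σ₁(σ₃(k)) = c⁻¹·k·c} × {0}. -/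
/-- The left nucleus of `Cay(R, c, σ₁, σ₂, σ₃, σ₄)`, as a bare set of pairs: the elements `a`
with `(a · z) · w = a · (z · w)` for all `z` and `w`. -/
def cayLeftNucleus {R : Type*} [Ring R] (c : R) (σ₁ σ₂ σ₃ σ₄ : R → R) : Set (R × R) :=
  {a | ∀ z w : R × R,
    cayMul c σ₁ σ₂ σ₃ σ₄ (cayMul c σ₁ σ₂ σ₃ σ₄ a z) w
      = cayMul c σ₁ σ₂ σ₃ σ₄ a (cayMul c σ₁ σ₂ σ₃ σ₄ z w)}

section Ring

variable {R : Type*} [Ring R] {σ₁ σ₂ σ₃ σ₄ : R →+* R} {c k m : R}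

theorem mk_mem_cayLeftNucleus_iff :
    (k, m) ∈ cayLeftNucleus c σ₁ σ₂ σ₃ σ₄ ↔
      c * σ₁ (σ₃ k) = k * c ∧
      (∀ y p, c * σ₁ m * σ₂ y * σ₂ (σ₄ p) = c * σ₁ m * σ₂ y * p) ∧
      (∀ x, c * σ₁ m * σ₁ (σ₄ x) = c * σ₁ m * σ₂ (σ₃ x)) ∧
      ∀ y q, m * σ₄ c * σ₄ (σ₁ y) * σ₄ (σ₂ q) = σ₃ c * σ₃ (σ₁ m) * σ₃ (σ₂ y) * q := by
  constructor
  · intro hkm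
    refine ⟨?_, fun y p => ?_, fun x => ?_, fun y q => ?_⟩
    · simpa [cayMul] using congrArg Prod.fst (hkm (0, 1) (0, 1))
    · simpa [cayMul, ← mul_assoc] using (congrArg Prod.fst (hkm (0, y) (p, 0))).symm
    · simpa [cayMul, ← mul_assoc] using congrArg Prod.fst (hkm (x, 0) (0, 1))
    · simpa [cayMul, ← mul_assoc] using (congrArg Prod.snd (hkm (0, y) (0, q))).symm
  · rintro ⟨hk, h₂₄, h₁₄, h₄₁⟩ ⟨x, y⟩ ⟨p, q⟩
    ext
    · simp only [cayMul, map_add, map_mul, mul_add, add_mul, ← mul_assoc, hk, h₂₄, h₁₄]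
      abel
    · simp only [cayMul, map_add, map_mul, mul_add, add_mul, ← mul_assoc, h₄₁]
      abel

theorem mk_zero_mem_cayLeftNucleus_iff :
    (k, 0) ∈ cayLeftNucleus c σ₁ σ₂ σ₃ σ₄ ↔ c * σ₁ (σ₃ k) = k * c := by
  simp [mk_mem_cayLeftNucleus_iff]

theorem comp_eq_of_mk_mem_cayLeftNucleus [NoZeroDivisors R] (hσ₁ : Function.Injective σ₁)
    (hc : σ₄ c ≠ 0) (hm : m ≠ 0) (hkm : (k, m) ∈ cayLeftNucleus c σ₁ σ₂ σ₃ σ₄) :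
    ⇑σ₂ ∘ ⇑σ₄ = id ∧ ⇑σ₁ ∘ ⇑σ₄ = ⇑σ₂ ∘ ⇑σ₃ ∧ ⇑σ₄ ∘ ⇑σ₁ = ⇑σ₃ ∘ ⇑σ₂ := by
  obtain ⟨-, h₂₄, h₁₄, h₄₁⟩ := mk_mem_cayLeftNucleus_iff.mp hkm
  have hc₀ : c ≠ 0 := ne_zero_of_map hc
  have hcm : c * σ₁ m ≠ 0 := mul_ne_zero hc₀ ((map_ne_zero_iff σ₁ hσ₁).mpr hm)
  have hmc : m * σ₄ c ≠ 0 := mul_ne_zero hm hc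
  have hfactor : m * σ₄ c = σ₃ c * σ₃ (σ₁ m) := by simpa using h₄₁ 1 1
  refine ⟨funext fun p => ?_, funext fun x => ?_, funext fun y => ?_⟩
  · exact mul_left_cancel₀ hcm (by simpa using h₂₄ 1 p)
  · exact mul_left_cancel₀ hcm (h₁₄ x)
  · exact mul_left_cancel₀ hmc (by simpa [hfactor] using h₄₁ y 1)

end Ring

theorem cay_central_division_algebra_left_nucleus_general
    {R : Type*} [Ring R] [NoZeroDivisors R] (σ₁ σ₂ σ₃ σ₄ : R →+* R) (c : R)
    (hσ₁ : Function.Injective σ₁) (hc : σ₄ c ≠ 0)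
    (h : (⇑σ₂ ∘ ⇑σ₄ ≠ id) ∨ (⇑σ₁ ∘ ⇑σ₄ ≠ ⇑σ₂ ∘ ⇑σ₃) ∨ (⇑σ₄ ∘ ⇑σ₁ ≠ ⇑σ₃ ∘ ⇑σ₂))
    (k m : R) :
    (k, m) ∈ cayLeftNucleus c σ₁ σ₂ σ₃ σ₄ ↔ m = 0 ∧ c * σ₁ (σ₃ k) = k * c := by
  constructor
  · intro hkm
    obtain rfl : m = 0 := by
      by_contra hm
      obtain ⟨h₂₄, h₁₄, h₄₁⟩ := comp_eq_of_mk_mem_cayLeftNucleus hσ₁ hc hm hkm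
      exact h.elim (· h₂₄) (·.elim (· h₁₄) (· h₄₁))
    exact ⟨rfl, mk_zero_mem_cayLeftNucleus_iff.mp hkm⟩
  · rintro ⟨rfl, hk⟩
    exact mk_zero_mem_cayLeftNucleus_iff.mpr hk

/-- If `σ₂∘σ₄ ≠ id`, or `σ₁∘σ₄ ≠ σ₂∘σ₃`, or `σ₄∘σ₁ ≠ σ₃∘σ₂`, then the
left nucleus of `Cay(D,c,σ₁,σ₂,σ₃,σ₄)` is `{k ∈ D : σ₁(σ₃(k)) = c⁻¹·k·c} × {0}`,
i.e. `(k,m)` lies in the left nucleus iff `m = 0` and `c·σ₁(σ₃(k)) = k·c`. -/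
theorem cay_central_division_algebra_left_nucleus
    {F D : Type*} [Field F] [DivisionRing D] [Algebra F D]
    [FiniteDimensional F D] [Algebra.IsCentral F D]
    (σ₁ σ₂ σ₃ σ₄ : D ≃ₐ[F] D) (c : D) (hc : c ≠ 0)
    (h : (⇑σ₂ ∘ ⇑σ₄ ≠ id) ∨ (⇑σ₁ ∘ ⇑σ₄ ≠ ⇑σ₂ ∘ ⇑σ₃) ∨ (⇑σ₄ ∘ ⇑σ₁ ≠ ⇑σ₃ ∘ ⇑σ₂))
    (k m : D) :
    (∀ z w : D × D,
        cayMul c σ₁ σ₂ σ₃ σ₄ (cayMul c σ₁ σ₂ σ₃ σ₄ (k, m) z) w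
          = cayMul c σ₁ σ₂ σ₃ σ₄ (k, m) (cayMul c σ₁ σ₂ σ₃ σ₄ z w)) ↔
      (m = 0 ∧ c * σ₁ (σ₃ k) = k * c) :=
  cay_central_division_algebra_left_nucleus_general (σ₁ : D →+* D) (σ₂ : D →+* D) (σ₃ : D →+* D)
    (σ₄ : D →+* D) c σ₁.injective ((map_ne_zero_iff σ₄ σ₄.injective).mpr hc) h k m
end

section
/- Let g, h : K → L be F-algebra isomorphisms, let b ∈ L with b ≠ 0, and suppose φᵢ = g ∘ σᵢ ∘ h⁻¹ for i = 1,2 and φᵢ = h ∘ σᵢ ∘ g⁻¹ for i = 3,4. Set c' = g(c)·φ₁(b)·φ₂(b). Then the map G : K × K → L × L defined by G(u,v) = (g(u), h(v)·b⁻¹) is an F-algebra isomorphism from Cay(K,c,σ₁,σ₂,σ₃,σ₄) to Cay(L,c',φ₁,φ₂,φ₃,φ₄); in particular G is bijective, F-linear, and multiplicative: G((u,v)·(x,y)) = G(u,v)·G(x,y) for all u, v, x, y ∈ K, where the first product uses the multiplication of Cay(K,c,σ₁,σ₂,σ₃,σ₄) and the second that of Cay(L,c',φ₁,φ₂,φ₃,φ₄).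 -/
/-!
`G` factors as `(u, v) ↦ (g u, h v)` followed by `(x, y) ↦ (x, y * b⁻¹)`. The first map transports
the double with parameter `c` to the one with parameter `g c` along any pair of homomorphisms
intertwining the `σᵢ` with the `φᵢ`. Multiplying second components by `a` divides the parameter
by `φ₁ a * φ₂ a`, since second components occur twice in the first component of a product but only
once in each term of the second; taking `a = b⁻¹` turns `g c` into `g c * φ₁ b * φ₂ b`.
-/

theorem prodMap_cayMul {R S : Type*} [Ring R] [Ring S] (g h : R →+* S) {c : R}
    {σ₁ σ₂ σ₃ σ₄ : R → R} {φ₁ φ₂ φ₃ φ₄ : S → S}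
    (hφ₁ : ∀ x, φ₁ (h x) = g (σ₁ x)) (hφ₂ : ∀ x, φ₂ (h x) = g (σ₂ x))
    (hφ₃ : ∀ x, φ₃ (g x) = h (σ₃ x)) (hφ₄ : ∀ x, φ₄ (g x) = h (σ₄ x)) (p q : R × R) :
    Prod.map g h (cayMul c σ₁ σ₂ σ₃ σ₄ p q) =
      cayMul (g c) φ₁ φ₂ φ₃ φ₄ (Prod.map g h p) (Prod.map g h q) := by
  simp only [cayMul, Prod.map, map_add, map_mul, hφ₁, hφ₂, hφ₃, hφ₄]

theorem prodMap_id_mul_right_cayMul {R : Type*} [CommRing R] (a c : R) (φ₁ φ₂ : R →ₙ* R)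
    (φ₃ φ₄ : R → R) (p q : R × R) :
    Prod.map id (· * a) (cayMul (c * φ₁ a * φ₂ a) φ₁ φ₂ φ₃ φ₄ p q) =
      cayMul c φ₁ φ₂ φ₃ φ₄ (Prod.map id (· * a) p) (Prod.map id (· * a) q) := by
  ext <;> simp only [cayMul, Prod.map, id, map_mul] <;> ring

theorem prodMap_id_mul_right_inv_cayMul {R : Type*} [CommRing R] (b : Rˣ) (c : R)
    (φ₁ φ₂ : R →* R) (φ₃ φ₄ : R → R) (p q : R × R) :
    Prod.map id (· * (↑b⁻¹ : R)) (cayMul c φ₁ φ₂ φ₃ φ₄ p q) =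
      cayMul (c * φ₁ b * φ₂ b) φ₁ φ₂ φ₃ φ₄
        (Prod.map id (· * (↑b⁻¹ : R)) p) (Prod.map id (· * (↑b⁻¹ : R)) q) := by
  have map_cancel (φ : R →* R) : φ b * φ ↑b⁻¹ = 1 := by
    rw [← map_mul, Units.mul_inv, map_one]
  have parameter_eq : c * φ₁ b * φ₂ b * φ₁ ↑b⁻¹ * φ₂ ↑b⁻¹ = c := by
    rw [mul_right_comm _ (φ₂ b), mul_assoc c, map_cancel, mul_one, mul_assoc, map_cancel, mul_one]
  have rescale := prodMap_id_mul_right_cayMul (↑b⁻¹ : R) (c * φ₁ b * φ₂ b)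
    (φ₁ : R →ₙ* R) (φ₂ : R →ₙ* R) φ₃ φ₄ p q
  simpa only [MulHom.coe_coe, parameter_eq] using rescale

/-- The map `(u, v) ↦ (g u, h v * b⁻¹)` underlying an isomorphism of generalized Cayley–Dickson
doubles. Only its linear structure is bundled, since doubles are encoded by the operation `cayMul`
on a product type rather than by a type carrying its own multiplication. -/
def cayLinearEquiv {F M A : Type*} [CommSemiring F] [AddCommMonoid M] [Module F M]
    [CommSemiring A] [Algebra F A] (g h : M ≃ₗ[F] A) (b : Aˣ) : (M × M) ≃ₗ[F] A × A :=
  g.prodCongr (h.trans (DistribMulAction.toLinearEquiv F A b⁻¹))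

theorem cayLinearEquiv_apply {F M A : Type*} [CommSemiring F] [AddCommMonoid M] [Module F M]
    [CommSemiring A] [Algebra F A] (g h : M ≃ₗ[F] A) (b : Aˣ) (p : M × M) :
    cayLinearEquiv g h b p = (g p.1, h p.2 * ↑b⁻¹) :=
  Prod.ext rfl (mul_comm _ _)

theorem cay_field_isomorphism_construction_general
    {F K L : Type*} [CommSemiring F] [Ring K] [CommRing L] [Algebra F K] [Algebra F L]
    (σ₁ σ₂ σ₃ σ₄ : K → K) (c : K) (φ₁ φ₂ : L →* L) (φ₃ φ₄ : L → L)
    (g h : K ≃ₐ[F] L) (b : Lˣ)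
    (hφ₁ : ∀ x : L, φ₁ x = g (σ₁ (h.symm x)))
    (hφ₂ : ∀ x : L, φ₂ x = g (σ₂ (h.symm x)))
    (hφ₃ : ∀ x : L, φ₃ x = h (σ₃ (g.symm x)))
    (hφ₄ : ∀ x : L, φ₄ x = h (σ₄ (g.symm x)))
    (c' : L) (hc' : c' = g c * φ₁ b * φ₂ b)
    (G : K × K → L × L) (hG : ∀ u v : K, G (u, v) = (g u, h v * ↑b⁻¹)) :
    Function.Bijective G ∧
    (∀ p q : K × K, G (p + q) = G p + G q) ∧
    (∀ (α : F) (p : K × K), G (α • p) = α • G p) ∧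
    (∀ p q : K × K, G (cayMul c σ₁ σ₂ σ₃ σ₄ p q) = cayMul c' φ₁ φ₂ φ₃ φ₄ (G p) (G q)) := by
  have G_eq_linearEquiv : G = cayLinearEquiv g.toLinearEquiv h.toLinearEquiv b :=
    funext fun p => by rw [cayLinearEquiv_apply]; exact hG p.1 p.2
  have G_eq_comp (p : K × K) : G p = Prod.map id (· * (↑b⁻¹ : L)) (Prod.map g h p) := hG p.1 p.2
  have transport (p q : K × K) : Prod.map g h (cayMul c σ₁ σ₂ σ₃ σ₄ p q) =
      cayMul (g c) φ₁ φ₂ φ₃ φ₄ (Prod.map g h p) (Prod.map g h q) :=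
    prodMap_cayMul (g : K →+* L) (h : K →+* L)
      (by simp [hφ₁]) (by simp [hφ₂]) (by simp [hφ₃]) (by simp [hφ₄]) p q
  have map_mul_G (p q : K × K) :
      G (cayMul c σ₁ σ₂ σ₃ σ₄ p q) = cayMul c' φ₁ φ₂ φ₃ φ₄ (G p) (G q) := by
    simp only [G_eq_comp, transport, prodMap_id_mul_right_inv_cayMul, hc']
  refine ⟨?_, ?_, ?_, map_mul_G⟩ <;> rw [G_eq_linearEquiv]
  exacts [LinearEquiv.bijective _, map_add _, map_smul _]

/-- Given `F`-isomorphisms `g,h : K → L`, `b ∈ L⁎`, and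
`φᵢ = g∘σᵢ∘h⁻¹` (i = 1,2), `φᵢ = h∘σᵢ∘g⁻¹` (i = 3,4), the map
`G(u,v) = (g(u), h(v)·b⁻¹)` is an `F`-algebra isomorphism from
`Cay(K,c,σ₁,σ₂,σ₃,σ₄)` to `Cay(L, g(c)·φ₁(b)·φ₂(b), φ₁,φ₂,φ₃,φ₄)`. -/
theorem cay_field_isomorphism_construction
    {F K L : Type*} [Field F] [Field K] [Field L] [Algebra F K] [Algebra F L]
    [FiniteDimensional F K] [FiniteDimensional F L]
    (σ₁ σ₂ σ₃ σ₄ : K ≃ₐ[F] K) (c : K) (hc : c ≠ 0)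
    (φ₁ φ₂ φ₃ φ₄ : L ≃ₐ[F] L)
    (g h : K ≃ₐ[F] L) (b : L) (hb : b ≠ 0)
    (hφ₁ : ∀ x : L, φ₁ x = g (σ₁ (h.symm x)))
    (hφ₂ : ∀ x : L, φ₂ x = g (σ₂ (h.symm x)))
    (hφ₃ : ∀ x : L, φ₃ x = h (σ₃ (g.symm x)))
    (hφ₄ : ∀ x : L, φ₄ x = h (σ₄ (g.symm x)))
    (c' : L) (hc' : c' = g c * φ₁ b * φ₂ b)
    (G : K × K → L × L) (hG : ∀ u v : K, G (u, v) = (g u, h v * b⁻¹)) :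
    Function.Bijective G ∧
    (∀ p q : K × K, G (p + q) = G p + G q) ∧
    (∀ (α : F) (p : K × K), G (α • p) = α • G p) ∧
    (∀ p q : K × K, G (cayMul c σ₁ σ₂ σ₃ σ₄ p q) = cayMul c' φ₁ φ₂ φ₃ φ₄ (G p) (G q)) := by
  exact cay_field_isomorphism_construction_general σ₁ σ₂ σ₃ σ₄ c φ₁ φ₂ φ₃ φ₄ g h
    (Units.mk0 b hb) hφ₁ hφ₂ hφ₃ hφ₄ c' hc' G hG
end

section
/- Let g, h : D → D' be F-algebra isomorphisms, let b ∈ F with b ≠ 0, and suppose φᵢ = g ∘ σᵢ ∘ h⁻¹ for i = 1,2 and φᵢ = h ∘ σᵢ ∘ g⁻¹ for i = 3,4. Set c' = g(c)·b². Then the map G : D × D → D' × D' defined by G(u,v) = (g(u), h(v)·b⁻¹) is an F-algebra isomorphism from Cay(D,c,σ₁,σ₂,σ₃,σ₄) to Cay(D',c',φ₁,φ₂,φ₃,φ₄); in particular G is bijective, F-linear, and multiplicative: G((u,v)·(x,y)) = G(u,v)·G(x,y) for all u, v, x, y ∈ D, where the first product uses the multiplication of Cay(D,c,σ₁,σ₂,σ₃,σ₄)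 and the second that of Cay(D',c',φ₁,φ₂,φ₃,φ₄). -/
/-!
The map `G` is `(u, v) ↦ (g u, h v)` followed by the rescaling `(x, y) ↦ (x, b⁻¹ y)`. The former
conjugates the twists and carries `c` to `g c`. Under the latter the term `c · φ₁(v) · φ₂(y)`,
quadratic in the second coordinates, acquires a factor `b⁻²`, which the `b²` in `c'` cancels; the
second component is linear in them, so it acquires exactly the required factor `b⁻¹`.
-/

theorem map_cayMul {A B : Type*} [Ring A] [Ring B] (g h : A →ₙ+* B) (c : A)
    {σ₁ σ₂ σ₃ σ₄ : A → A} {φ₁ φ₂ φ₃ φ₄ : B → B}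
    (h₁ : ∀ x, φ₁ (h x) = g (σ₁ x)) (h₂ : ∀ x, φ₂ (h x) = g (σ₂ x))
    (h₃ : ∀ x, φ₃ (g x) = h (σ₃ x)) (h₄ : ∀ x, φ₄ (g x) = h (σ₄ x)) (p q : A × A) :
    Prod.map g h (cayMul c σ₁ σ₂ σ₃ σ₄ p q) =
      cayMul (g c) φ₁ φ₂ φ₃ φ₄ (Prod.map g h p) (Prod.map g h q) := by
  simp only [cayMul, Prod.map, map_add, map_mul, h₁, h₂, h₃, h₄]

theorem smul_snd_cayMul {M A : Type*} [Monoid M] [Ring A] [DistribMulAction M A]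
    [IsScalarTower M A A] [SMulCommClass M A A] (a : M) (c : A) (φ₁ φ₂ : A →[M] A)
    (φ₃ φ₄ : A → A) (p q : A × A) :
    Prod.map id (a • ·) (cayMul (a ^ 2 • c) φ₁ φ₂ φ₃ φ₄ p q) =
      cayMul c φ₁ φ₂ φ₃ φ₄ (Prod.map id (a • ·) p) (Prod.map id (a • ·) q) := by
  simp only [cayMul, Prod.map, id, map_smul, smul_add, smul_mul_assoc, mul_smul_comm, smul_smul,
    pow_two]

/-- The map `(u, v) ↦ (g u, b⁻¹ • h v)` between the modules underlying two generalized
Cayley–Dickson doubles. Taking `b` to be a unit makes it invertible over any commutative semiring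
of scalars. -/
def cayEquiv {R M N : Type*} [CommSemiring R] [AddCommMonoid M] [AddCommMonoid N] [Module R M]
    [Module R N] (g h : M ≃ₗ[R] N) (b : Rˣ) : (M × M) ≃ₗ[R] (N × N) :=
  g.prodCongr (h ≪≫ₗ LinearEquiv.smulOfUnit b⁻¹)

section Isomorphism

variable {R A B : Type*} [CommSemiring R] [Ring A] [Ring B] [Algebra R A] [Algebra R B]

theorem cayEquiv_cayMul (g h : A ≃ₐ[R] B) (b : Rˣ) (c : A) {σ₁ σ₂ σ₃ σ₄ : A → A}
    {φ₁ φ₂ : B →[R] B} {φ₃ φ₄ : B → B}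
    (h₁ : ∀ x, φ₁ (h x) = g (σ₁ x)) (h₂ : ∀ x, φ₂ (h x) = g (σ₂ x))
    (h₃ : ∀ x, φ₃ (g x) = h (σ₃ x)) (h₄ : ∀ x, φ₄ (g x) = h (σ₄ x)) (p q : A × A) :
    cayEquiv g.toLinearEquiv h.toLinearEquiv b (cayMul c σ₁ σ₂ σ₃ σ₄ p q) =
      cayMul ((b : R) ^ 2 • g c) φ₁ φ₂ φ₃ φ₄
        (cayEquiv g.toLinearEquiv h.toLinearEquiv b p)
        (cayEquiv g.toLinearEquiv h.toLinearEquiv b q) := by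
  let rescale : B × B → B × B := Prod.map id ((↑b⁻¹ : R) • ·)
  have cancel : (↑b⁻¹ : R) ^ 2 • (b : R) ^ 2 • g c = g c := by
    rw [smul_smul, ← mul_pow, b.inv_mul, one_pow, one_smul]
  calc rescale (Prod.map g h (cayMul c σ₁ σ₂ σ₃ σ₄ p q))
    _ = rescale (cayMul ((↑b⁻¹ : R) ^ 2 • (b : R) ^ 2 • g c) φ₁ φ₂ φ₃ φ₄
          (Prod.map g h p) (Prod.map g h q)) := by
      rw [cancel]
      exact congrArg rescale (map_cayMul (g : A →ₙ+* B) (h : A →ₙ+* B) c h₁ h₂ h₃ h₄ p q)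
    _ = cayMul ((b : R) ^ 2 • g c) φ₁ φ₂ φ₃ φ₄
          (rescale (Prod.map g h p)) (rescale (Prod.map g h q)) :=
      smul_snd_cayMul (↑b⁻¹ : R) _ φ₁ φ₂ φ₃ φ₄ _ _

theorem cay_csa_isomorphism_construction_general (σ₁ σ₂ σ₃ σ₄ : A → A) (c : A)
    (φ₁ φ₂ : B →[R] B) (φ₃ φ₄ : B → B) (g h : A ≃ₐ[R] B) (b : Rˣ)
    (hφ₁ : ∀ x, φ₁ x = g (σ₁ (h.symm x))) (hφ₂ : ∀ x, φ₂ x = g (σ₂ (h.symm x)))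
    (hφ₃ : ∀ x, φ₃ x = h (σ₃ (g.symm x))) (hφ₄ : ∀ x, φ₄ x = h (σ₄ (g.symm x)))
    (c' : B) (hc' : c' = g c * algebraMap R B (b ^ 2))
    (G : A × A → B × B) (hG : ∀ u v, G (u, v) = (g u, h v * algebraMap R B ↑b⁻¹)) :
    Function.Bijective G ∧
    (∀ p q, G (p + q) = G p + G q) ∧
    (∀ (α : R) p, G (α • p) = α • G p) ∧
    (∀ p q, G (cayMul c σ₁ σ₂ σ₃ σ₄ p q) = cayMul c' φ₁ φ₂ φ₃ φ₄ (G p) (G q)) := by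
  obtain rfl : G = cayEquiv g.toLinearEquiv h.toLinearEquiv b := by
    funext ⟨u, v⟩
    rw [hG, ← Algebra.commutes, ← Algebra.smul_def]
    rfl
  obtain rfl : c' = (b : R) ^ 2 • g c := by rw [hc', ← Algebra.commutes, ← Algebra.smul_def]
  refine ⟨LinearEquiv.bijective _, map_add _, map_smul _, cayEquiv_cayMul g h b c ?_ ?_ ?_ ?_⟩ <;>
    simp only [hφ₁, hφ₂, hφ₃, hφ₄, AlgEquiv.symm_apply_apply, implies_true]

end Isomorphism

/-- Given `F`-isomorphisms `g,h : D → D'` of central simple `F`-algebras,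
`b ∈ F⁎`, and `φᵢ = g∘σᵢ∘h⁻¹` (i = 1,2), `φᵢ = h∘σᵢ∘g⁻¹` (i = 3,4), the map
`G(u,v) = (g(u), h(v)·b⁻¹)` is an `F`-algebra isomorphism from
`Cay(D,c,σ₁,σ₂,σ₃,σ₄)` to `Cay(D', g(c)·b², φ₁,φ₂,φ₃,φ₄)`. -/
theorem cay_csa_isomorphism_construction
    {F D D' : Type*} [Field F] [Ring D] [Ring D'] [Algebra F D] [Algebra F D']
    [FiniteDimensional F D] [FiniteDimensional F D']
    [Algebra.IsCentral F D] [IsSimpleRing D] [Algebra.IsCentral F D'] [IsSimpleRing D']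
    (σ₁ σ₂ σ₃ σ₄ : D ≃ₐ[F] D) (c : D) (hc : c ≠ 0)
    (φ₁ φ₂ φ₃ φ₄ : D' ≃ₐ[F] D')
    (g h : D ≃ₐ[F] D') (b : F) (hb : b ≠ 0)
    (hφ₁ : ∀ x : D', φ₁ x = g (σ₁ (h.symm x)))
    (hφ₂ : ∀ x : D', φ₂ x = g (σ₂ (h.symm x)))
    (hφ₃ : ∀ x : D', φ₃ x = h (σ₃ (g.symm x)))
    (hφ₄ : ∀ x : D', φ₄ x = h (σ₄ (g.symm x)))
    (c' : D') (hc' : c' = g c * algebraMap F D' (b ^ 2))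
    (G : D × D → D' × D') (hG : ∀ u v : D, G (u, v) = (g u, h v * algebraMap F D' b⁻¹)) :
    Function.Bijective G ∧
    (∀ p q : D × D, G (p + q) = G p + G q) ∧
    (∀ (α : F) (p : D × D), G (α • p) = α • G p) ∧
    (∀ p q : D × D, G (cayMul c σ₁ σ₂ σ₃ σ₄ p q) = cayMul c' φ₁ φ₂ φ₃ φ₄ (G p) (G q)) :=
  cay_csa_isomorphism_construction_general σ₁ σ₂ σ₃ σ₄ c φ₁.toLinearMap.toMulActionHom
    φ₂.toLinearMap.toMulActionHom φ₃ φ₄ g h (Units.mk0 b hb) hφ₁ hφ₂ hφ₃ hφ₄ c' hc' G hG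
end

section
/- The map G : D × D → D × D defined by G(u,v) = (u, σ₄⁻¹(v)) is an F-algebra isomorphism from Cay(D,c,σ₁,σ₂,σ₃,σ₄) to Cay(D,c,σ₁∘σ₄, σ₂∘σ₄, σ₄⁻¹∘σ₃, id); in particular G is bijective, F-linear, and satisfies G((u,v)·(x,y)) = G(u,v)·G(x,y) for all u, v, x, y ∈ D, where the first product uses the multiplication of Cay(D,c,σ₁,σ₂,σ₃,σ₄) and the second that of Cay(D,c,σ₁∘σ₄, σ₂∘σ₄, σ₄⁻¹∘σ₃, id). Hence every such algebra is isomorphic to one with fourth automorphism equal to the identity. -/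
section Twist

variable {F R : Type*} [CommSemiring F] [Ring R] [Algebra F R]

/-- The map `G(u, v) = (u, σ⁻¹(v))` on the space underlying a Cayley–Dickson double, bundled as a
linear equivalence. It carries no multiplicative structure, because `cayMul` is a bare operation on
`R × R`, where `*` is the componentwise product. -/
def cayTwist (σ : R ≃ₐ[F] R) : (R × R) ≃ₗ[F] R × R :=
  (LinearEquiv.refl F R).prodCongr σ.symm.toLinearEquiv

theorem cayTwist_apply (σ : R ≃ₐ[F] R) (p : R × R) : cayTwist σ p = (p.1, σ.symm p.2) :=
  rfl

/- The first components agree because `σ₄ (σ₄⁻¹ v) = v`; in the second, the multiplicative map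
`σ₄⁻¹` undoes the `σ₄` applied to `q.1`. -/
theorem cayTwist_cayMul (c : R) (σ₁ σ₂ σ₃ : R → R) (σ₄ : R ≃ₐ[F] R) (p q : R × R) :
    cayTwist σ₄ (cayMul c σ₁ σ₂ σ₃ σ₄ p q) =
      cayMul c (σ₁ ∘ σ₄) (σ₂ ∘ σ₄) (σ₄.symm ∘ σ₃) id (cayTwist σ₄ p) (cayTwist σ₄ q) := by
  have fst_eq : p.1 * q.1 + c * σ₁ p.2 * σ₂ q.2 =
      p.1 * q.1 + c * σ₁ (σ₄ (σ₄.symm p.2)) * σ₂ (σ₄ (σ₄.symm q.2)) := by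
    rw [σ₄.apply_symm_apply, σ₄.apply_symm_apply]
  have snd_eq : σ₄.symm (σ₃ p.1 * q.2 + p.2 * σ₄ q.1) =
      σ₄.symm (σ₃ p.1) * σ₄.symm q.2 + σ₄.symm p.2 * q.1 := by
    rw [map_add, map_mul, map_mul, σ₄.symm_apply_apply]
  exact Prod.ext fst_eq snd_eq

end Twist

theorem cay_isomorphic_to_fourth_id_general
    {F R : Type*} [CommSemiring F] [Ring R] [Algebra F R]
    (σ₁ σ₂ σ₃ : R → R) (σ₄ : R ≃ₐ[F] R) (c : R)
    (G : R × R → R × R) (hG : ∀ u v : R, G (u, v) = (u, σ₄.symm v)) :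
    Function.Bijective G ∧
    (∀ p q : R × R, G (p + q) = G p + G q) ∧
    (∀ (α : F) (p : R × R), G (α • p) = α • G p) ∧
    (∀ p q : R × R,
      G (cayMul c σ₁ σ₂ σ₃ σ₄ p q)
        = cayMul c (σ₁ ∘ σ₄) (σ₂ ∘ σ₄) (σ₄.symm ∘ σ₃) id (G p) (G q)) := by
  obtain rfl : G = cayTwist σ₄ := funext fun p => (hG p.1 p.2).trans (cayTwist_apply σ₄ p).symm
  exact ⟨(cayTwist σ₄).bijective, map_add _, map_smul _, cayTwist_cayMul c σ₁ σ₂ σ₃ σ₄⟩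

/-- `G(u,v) = (u, σ₄⁻¹(v))` is an `F`-algebra isomorphism from
`Cay(D,c,σ₁,σ₂,σ₃,σ₄)` to `Cay(D,c,σ₁∘σ₄,σ₂∘σ₄,σ₄⁻¹∘σ₃,id)`; hence every such
algebra is isomorphic to one whose fourth automorphism is the identity. -/
theorem cay_isomorphic_to_fourth_id
    {F D : Type*} [Field F] [DivisionRing D] [Algebra F D]
    [FiniteDimensional F D] [Algebra.IsCentral F D]
    (σ₁ σ₂ σ₃ σ₄ : D ≃ₐ[F] D) (c : D) (hc : c ≠ 0)
    (G : D × D → D × D) (hG : ∀ u v : D, G (u, v) = (u, σ₄.symm v)) :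
    Function.Bijective G ∧
    (∀ p q : D × D, G (p + q) = G p + G q) ∧
    (∀ (α : F) (p : D × D), G (α • p) = α • G p) ∧
    (∀ p q : D × D,
      G (cayMul c σ₁ σ₂ σ₃ σ₄ p q)
        = cayMul c (⇑σ₁ ∘ ⇑σ₄) (⇑σ₂ ∘ ⇑σ₄) (⇑σ₄.symm ∘ ⇑σ₃) id (G p) (G q)) :=
  cay_isomorphic_to_fourth_id_general σ₁ σ₂ σ₃ σ₄ c G hG
end

section
/- Assume the characteristic of F is not 2. Let G : K × K → L × L be an F-algebra isomorphism from Cay(K,c,σ₁,σ₂,σ₃,σ₄) to Cay(L,c',φ₁,φ₂,φ₃,φ₄) (i.e., G is bijective, F-linear, and G((u,v)·(x,y)) = G(u,v)·G(x,y) for all u,v,x,y ∈ K with the respective multiplications), and suppose G restricts to an isomorphism g : K → L of F-algebras, i.e., G(x,0) = (g(x),0) for all x ∈ K. Then there exist an F-algebra isomorphism h : K → L and b ∈ L with b ≠ 0 such that G(x,y) = (g(x), h(y)·b) for all x, y ∈ K, φᵢ ∘ h = g ∘ σᵢ for i = 1,2, φᵢ ∘ g = h ∘ σᵢ for i = 3,4,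 and g(c) = c'·φ₁(b)·φ₂(b). -/
/-!
The image `G (0, 1) = (a, b)` determines `G`: computing `(0, σ₃ u)` as `(u, 0) · (0, 1)` and
`(0, σ₄ v)` as `(0, 1) · (v, 0)` gives
`G (0, σ₃ u) = (g u * a, φ₃ (g u) * b)` and `G (0, σ₄ v) = (a * g v, b * φ₄ (g v))`.
If `a ≠ 0`, comparing first components gives `σ₃ = σ₄`, and then comparing second components gives
`φ₃ = φ₄`; but `(a, b)²` lies in `L × 0`, so `2 * φ₃ a * b = 0`, a contradiction in characteristic
not two. With `a = 0` the map `h = φ₃ ∘ g ∘ σ₃⁻¹` works, and the remaining relations are read off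
the products `(0, v) · (0, y)`.
-/

section cayMul

variable {R : Type*} [Ring R] {c : R} {σ₁ σ₂ σ₃ σ₄ : R → R}

theorem cayMul_inl_inr (h₁ : σ₁ 0 = 0) (u y : R) :
    cayMul c σ₁ σ₂ σ₃ σ₄ (u, 0) (0, y) = (0, σ₃ u * y) := by
  simp [cayMul, h₁]

theorem cayMul_inr_inl (h₂ : σ₂ 0 = 0) (v x : R) :
    cayMul c σ₁ σ₂ σ₃ σ₄ (0, v) (x, 0) = (0, v * σ₄ x) := by
  simp [cayMul, h₂]

theorem cayMul_inr_inr (h₃ : σ₃ 0 = 0) (h₄ : σ₄ 0 = 0) (v y : R) :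
    cayMul c σ₁ σ₂ σ₃ σ₄ (0, v) (0, y) = (c * σ₁ v * σ₂ y, 0) := by
  simp [cayMul, h₃, h₄]

end cayMul

/-- `G` is an additive and multiplicative map from the double `Cay(R, c, σ₁, σ₂, σ₃, σ₄)` to
`Cay(S, c', φ₁, φ₂, φ₃, φ₄)` whose restriction to the first factor is `g`. -/
structure IsCayHomExtending {R S : Type*} [Ring R] [Ring S] (c : R) (σ₁ σ₂ σ₃ σ₄ : R → R)
    (c' : S) (φ₁ φ₂ φ₃ φ₄ : S → S) (g : R → S) (G : R × R → S × S) : Prop where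
  map_add : ∀ p q, G (p + q) = G p + G q
  map_cayMul : ∀ p q, G (cayMul c σ₁ σ₂ σ₃ σ₄ p q) = cayMul c' φ₁ φ₂ φ₃ φ₄ (G p) (G q)
  apply_inl : ∀ x, G (x, 0) = (g x, 0)

namespace IsCayHomExtending

section Ring

variable {F R S : Type*} [CommSemiring F] [Ring R] [Ring S] [Algebra F R] [Algebra F S]
  {σ₁ σ₂ σ₃ σ₄ : R ≃ₐ[F] R} {φ₁ φ₂ φ₃ φ₄ : S ≃ₐ[F] S} {c : R} {c' : S} {g : R ≃ₐ[F] S}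
  {G : R × R → S × S}

theorem apply_mk_third (hG : IsCayHomExtending c σ₁ σ₂ σ₃ σ₄ c' φ₁ φ₂ φ₃ φ₄ g G) (x u : R) :
    G (x, σ₃ u) = (g x + g u * (G (0, 1)).1, φ₃ (g u) * (G (0, 1)).2) := by
  have split : (x, σ₃ u) = (x, 0) + cayMul c σ₁ σ₂ σ₃ σ₄ (u, 0) (0, 1) := by
    simp [cayMul_inl_inr]
  rw [split, hG.map_add, hG.map_cayMul, hG.apply_inl, hG.apply_inl]
  simp [cayMul]

theorem apply_mk_fourth (hG : IsCayHomExtending c σ₁ σ₂ σ₃ σ₄ c' φ₁ φ₂ φ₃ φ₄ g G) (x v : R) :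
    G (x, σ₄ v) = (g x + (G (0, 1)).1 * g v, (G (0, 1)).2 * φ₄ (g v)) := by
  have split : (x, σ₄ v) = (x, 0) + cayMul c σ₁ σ₂ σ₃ σ₄ (0, 1) (v, 0) := by
    simp [cayMul_inr_inl]
  rw [split, hG.map_add, hG.map_cayMul, hG.apply_inl, hG.apply_inl]
  simp [cayMul]

theorem cayMul_apply_inr_apply_inr
    (hG : IsCayHomExtending c σ₁ σ₂ σ₃ σ₄ c' φ₁ φ₂ φ₃ φ₄ g G) (v y : R) :
    cayMul c' φ₁ φ₂ φ₃ φ₄ (G (0, v)) (G (0, y)) = (g (c * σ₁ v * σ₂ y), 0) := by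
  rw [← hG.map_cayMul, cayMul_inr_inr (map_zero σ₃) (map_zero σ₄), hG.apply_inl]

theorem snd_apply_inr_one_ne_zero [Nontrivial S]
    (hG : IsCayHomExtending c σ₁ σ₂ σ₃ σ₄ c' φ₁ φ₂ φ₃ φ₄ g G) (hsurj : Function.Surjective G) :
    (G (0, 1)).2 ≠ 0 := by
  intro hb
  obtain ⟨⟨x, y⟩, hxy⟩ := hsurj (0, 1)
  obtain ⟨u, rfl⟩ := σ₃.surjective y
  simp [hG.apply_mk_third, hb] at hxy

theorem apply_mk_of_fst_eq_zero (hG : IsCayHomExtending c σ₁ σ₂ σ₃ σ₄ c' φ₁ φ₂ φ₃ φ₄ g G)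
    (ha : (G (0, 1)).1 = 0) (x y : R) :
    G (x, y) = (g x, φ₃ (g (σ₃.symm y)) * (G (0, 1)).2) := by
  simpa [ha] using hG.apply_mk_third x (σ₃.symm y)

theorem map_inr_mul_inr_of_fst_eq_zero (hG : IsCayHomExtending c σ₁ σ₂ σ₃ σ₄ c' φ₁ φ₂ φ₃ φ₄ g G)
    (ha : (G (0, 1)).1 = 0) (v y : R) :
    g (c * σ₁ v * σ₂ y) =
      c' * φ₁ (φ₃ (g (σ₃.symm v)) * (G (0, 1)).2) *
        φ₂ (φ₃ (g (σ₃.symm y)) * (G (0, 1)).2) := by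
  have hfst := congrArg Prod.fst (hG.cayMul_apply_inr_apply_inr v y)
  rw [hG.apply_mk_of_fst_eq_zero ha 0 v, hG.apply_mk_of_fst_eq_zero ha 0 y] at hfst
  simpa [cayMul] using hfst.symm

end Ring

section CommRing

variable {F R S : Type*} [CommSemiring F] [Ring R] [CommRing S] [NoZeroDivisors S]
  [Algebra F R] [Algebra F S]
  {σ₁ σ₂ σ₃ σ₄ : R ≃ₐ[F] R} {φ₁ φ₂ φ₃ φ₄ : S ≃ₐ[F] S} {c : R} {c' : S} {g : R ≃ₐ[F] S}
  {G : R × R → S × S}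

theorem eq_of_third_eq_fourth (hG : IsCayHomExtending c σ₁ σ₂ σ₃ σ₄ c' φ₁ φ₂ φ₃ φ₄ g G)
    (ha : (G (0, 1)).1 ≠ 0) {u v : R} (huv : σ₃ u = σ₄ v) : u = v := by
  have hcomp := hG.apply_mk_third 0 u
  rw [huv, hG.apply_mk_fourth, Prod.mk.injEq, add_right_inj, mul_comm] at hcomp
  exact (g.injective (mul_right_cancel₀ ha hcomp.1)).symm

theorem third_map_eq_fourth_map (hG : IsCayHomExtending c σ₁ σ₂ σ₃ σ₄ c' φ₁ φ₂ φ₃ φ₄ g G)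
    (hb : (G (0, 1)).2 ≠ 0) {u v : R} (huv : σ₃ u = σ₄ v) : φ₃ (g u) = φ₄ (g v) := by
  have hcomp := hG.apply_mk_third 0 u
  rw [huv, hG.apply_mk_fourth, Prod.mk.injEq, mul_comm _ (φ₄ _)] at hcomp
  exact (mul_right_cancel₀ hb hcomp.2).symm

theorem fst_apply_inr_one_eq_zero (hG : IsCayHomExtending c σ₁ σ₂ σ₃ σ₄ c' φ₁ φ₂ φ₃ φ₄ g G)
    (h2 : (2 : S) ≠ 0) (hb : (G (0, 1)).2 ≠ 0) : (G (0, 1)).1 = 0 := by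
  by_contra ha
  have hσ (u : R) : σ₃ u = σ₄ u := by
    have huv : σ₃ u = σ₄ (σ₄.symm (σ₃ u)) := (σ₄.apply_symm_apply _).symm
    exact huv.trans (congrArg σ₄ (hG.eq_of_third_eq_fourth ha huv).symm)
  have hφ (s : S) : φ₃ s = φ₄ s := by
    obtain ⟨u, rfl⟩ := g.surjective s
    exact hG.third_map_eq_fourth_map hb (hσ u)
  have hsq : φ₃ (G (0, 1)).1 * (G (0, 1)).2 + (G (0, 1)).2 * φ₄ (G (0, 1)).1 = 0 :=
    congrArg Prod.snd (hG.cayMul_apply_inr_apply_inr 1 1)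
  have htwo : 2 * (φ₄ (G (0, 1)).1 * (G (0, 1)).2) = 0 := by
    rw [hφ] at hsq
    linear_combination hsq
  exact mul_ne_zero h2 (mul_ne_zero ((map_ne_zero_iff φ₄ φ₄.injective).2 ha) hb) htwo

end CommRing

end IsCayHomExtending

theorem cay_field_isomorphism_restricting_form_general
    {F K L : Type*} [CommSemiring F] [Ring K] [CommRing L] [IsDomain L]
    [Algebra F K] [Algebra F L] (h2 : (2 : L) ≠ 0)
    {σ₁ σ₂ σ₃ σ₄ : K ≃ₐ[F] K} {c : K} (hc : c ≠ 0)
    {φ₁ φ₂ φ₃ φ₄ : L ≃ₐ[F] L} {c' : L} {G : K × K → L × L} {g : K ≃ₐ[F] L}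
    (hG : IsCayHomExtending c σ₁ σ₂ σ₃ σ₄ c' φ₁ φ₂ φ₃ φ₄ g G) (hsurj : Function.Surjective G) :
    ∃ (h : K ≃ₐ[F] L) (b : L), b ≠ 0 ∧
      (∀ x y : K, G (x, y) = (g x, h y * b)) ∧
      (∀ x : K, φ₁ (h x) = g (σ₁ x)) ∧
      (∀ x : K, φ₂ (h x) = g (σ₂ x)) ∧
      (∀ x : K, φ₃ (g x) = h (σ₃ x)) ∧
      (∀ x : K, φ₄ (g x) = h (σ₄ x)) ∧
      g c = c' * φ₁ b * φ₂ b := by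
  have hb := hG.snd_apply_inr_one_ne_zero hsurj
  have ha := hG.fst_apply_inr_one_eq_zero h2 hb
  have hmul := hG.map_inr_mul_inr_of_fst_eq_zero ha
  have hgc : g c = c' * φ₁ (G (0, 1)).2 * φ₂ (G (0, 1)).2 := by simpa using hmul 1 1
  have hgc0 : g c ≠ 0 := (map_ne_zero_iff g g.injective).2 hc
  refine ⟨(σ₃.symm.trans g).trans φ₃, (G (0, 1)).2, hb, hG.apply_mk_of_fst_eq_zero ha,
    fun x ↦ mul_left_cancel₀ hgc0 ?_, fun x ↦ mul_left_cancel₀ hgc0 ?_, fun x ↦ ?_, fun x ↦ ?_, hgc⟩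
  · have hx1 := hmul x 1
    simp only [map_mul, map_one, mul_one, one_mul] at hx1
    rw [hx1, hgc, AlgEquiv.trans_apply, AlgEquiv.trans_apply]
    ring
  · have h1x := hmul 1 x
    simp only [map_mul, map_one, mul_one, one_mul] at h1x
    rw [h1x, hgc, AlgEquiv.trans_apply, AlgEquiv.trans_apply]
    ring
  · simp
  · exact (hG.third_map_eq_fourth_map hb (σ₃.apply_symm_apply (σ₄ x))).symm

/-- If `char F ≠ 2` and `G : Cay(K,c,σ₁,σ₂,σ₃,σ₄) → Cay(L,c',φ₁,φ₂,φ₃,φ₄)`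
is an `F`-algebra isomorphism restricting to an isomorphism `g : K → L`, then
`G(x,y) = (g(x), h(y)·b)` for some isomorphism `h : K → L` with `φᵢ∘h = g∘σᵢ`
(i = 1,2), `φᵢ∘g = h∘σᵢ` (i = 3,4), and some `b ≠ 0` with `g(c) = c'·φ₁(b)·φ₂(b)`. -/
theorem cay_field_isomorphism_restricting_form
    {F K L : Type*} [Field F] [Field K] [Field L] [Algebra F K] [Algebra F L]
    [FiniteDimensional F K] [FiniteDimensional F L]
    (hF : (2 : F) ≠ 0)
    (σ₁ σ₂ σ₃ σ₄ : K ≃ₐ[F] K) (c : K) (hc : c ≠ 0)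
    (φ₁ φ₂ φ₃ φ₄ : L ≃ₐ[F] L) (c' : L) (hc' : c' ≠ 0)
    (G : K × K → L × L)
    (hGbij : Function.Bijective G)
    (hGadd : ∀ p q : K × K, G (p + q) = G p + G q)
    (hGsmul : ∀ (α : F) (p : K × K), G (α • p) = α • G p)
    (hGmul : ∀ p q : K × K,
      G (cayMul c σ₁ σ₂ σ₃ σ₄ p q) = cayMul c' φ₁ φ₂ φ₃ φ₄ (G p) (G q))
    (g : K ≃ₐ[F] L) (hGg : ∀ x : K, G (x, 0) = (g x, 0)) :
    ∃ (h : K ≃ₐ[F] L) (b : L), b ≠ 0 ∧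
      (∀ x y : K, G (x, y) = (g x, h y * b)) ∧
      (∀ x : K, φ₁ (h x) = g (σ₁ x)) ∧
      (∀ x : K, φ₂ (h x) = g (σ₂ x)) ∧
      (∀ x : K, φ₃ (g x) = h (σ₃ x)) ∧
      (∀ x : K, φ₄ (g x) = h (σ₄ x)) ∧
      g c = c' * φ₁ b * φ₂ b := by
  have h2 : (2 : L) ≠ 0 := map_ofNat (algebraMap F L) 2 ▸ (map_ne_zero _).2 hF
  exact cay_field_isomorphism_restricting_form_general h2 hc ⟨hGadd, hGmul, hGg⟩ hGbij.2
end

section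
/- Let g, h be F-algebra automorphisms of K such that g ∘ σᵢ = σᵢ ∘ h for i = 1,2 and g ∘ σᵢ⁻¹ = σᵢ⁻¹ ∘ h for i = 3,4, and let b ∈ K with b ≠ 0 satisfy g(c) = σ₁(b)·σ₂(b)·c. Then the map G : K × K → K × K defined by G(u,v) = (g(u), h(v)·b) is an F-algebra automorphism of Cay(K,c,σ₁,σ₂,σ₃,σ₄); in particular G is bijective, F-linear, and G((u,v)·(x,y)) = G(u,v)·G(x,y) for all u, v, x, y ∈ K. -/
/-!
In the second component of a product, the factor `b` of `G (u, v) = (g u, h v * b)` occurs once in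
each term, so it suffices that `h ∘ σᵢ = σᵢ ∘ g` for `i = 3, 4`. In the first component `b`
contributes the central factor `σ₁ b * σ₂ b`, by which `g` multiplies `c`.
-/

section CayMap

variable {F A B : Type*} [CommSemiring F]

section Semiring

variable [Semiring A] [Semiring B] [Algebra F A] [Algebra F B]

/-- The `F`-linear map `(u, v) ↦ (g u, h v * b)`, the candidate homomorphism between two
generalized Cayley–Dickson doubles, with underlying modules `A × A` and `B × B`. -/
def cayMap (g h : A →ₗ[F] B) (b : B) : A × A →ₗ[F] B × B :=
  g.prodMap (LinearMap.mulRight F b ∘ₗ h)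

theorem cayMap_bijective {g h : A →ₗ[F] B} {b : B} (hg : Function.Bijective g)
    (hh : Function.Bijective h) (hb : IsUnit b) : Function.Bijective (cayMap g h b) :=
  hg.prodMap ((IsUnit.isUnit_iff_mulRight_bijective.mp hb).comp hh)

end Semiring

variable [Ring A] [Ring B] [Algebra F A] [Algebra F B]

theorem cayMap_cayMul {g h : A →ₐ[F] B} {b d : B} {c : A} {σ₁ σ₂ σ₃ σ₄ : A → A}
    {τ₁ τ₂ : B →* B} {τ₃ τ₄ : B → B}
    (h₁ : ∀ x, g (σ₁ x) = τ₁ (h x)) (h₂ : ∀ x, g (σ₂ x) = τ₂ (h x))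
    (h₃ : ∀ x, h (σ₃ x) = τ₃ (g x)) (h₄ : ∀ x, h (σ₄ x) = τ₄ (g x))
    (hb : b ∈ Set.center B) (hb₁ : τ₁ b ∈ Set.center B) (hb₂ : τ₂ b ∈ Set.center B)
    (hc : g c = τ₁ b * τ₂ b * d) (p q : A × A) :
    cayMap g.toLinearMap h.toLinearMap b (cayMul c σ₁ σ₂ σ₃ σ₄ p q) =
      cayMul d τ₁ τ₂ τ₃ τ₄ (cayMap g.toLinearMap h.toLinearMap b p)
        (cayMap g.toLinearMap h.toLinearMap b q) := by
  obtain ⟨u, v⟩ := p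
  obtain ⟨x, y⟩ := q
  refine Prod.ext ?_ ?_
  · change g (u * x + c * σ₁ v * σ₂ y) = g u * g x + d * τ₁ (h v * b) * τ₂ (h y * b)
    have map_twisted_product : g (c * σ₁ v * σ₂ y) = d * τ₁ (h v * b) * τ₂ (h y * b) :=
      calc g (c * σ₁ v * σ₂ y)
          = τ₁ b * (τ₂ b * (d * τ₁ (h v) * τ₂ (h y))) := by
            simp only [map_mul, hc, h₁, h₂, mul_assoc]
        _ = τ₁ b * (d * τ₁ (h v)) * (τ₂ (h y) * τ₂ b) := by
            rw [(hb₂.comm _).eq, mul_assoc (d * τ₁ (h v)), mul_assoc (τ₁ b)]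
        _ = d * τ₁ (h v * b) * τ₂ (h y * b) := by
            rw [(hb₁.comm _).eq, map_mul, map_mul, mul_assoc d]
    rw [map_add, map_mul, map_twisted_product]
  · change h (σ₃ u * y + v * σ₄ x) * b = τ₃ (g u) * (h y * b) + h v * b * τ₄ (g x)
    rw [map_add, map_mul, map_mul, h₃, h₄, add_mul, mul_assoc, mul_assoc, mul_assoc,
      (hb.comm (τ₄ (g x))).eq]

end CayMap

theorem cay_field_automorphism_construction_general
    {F A : Type*} [CommSemiring F] [Ring A] [Algebra F A]
    (σ₁ σ₂ σ₃ σ₄ : A ≃ₐ[F] A) (c : A)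
    (g h : A ≃ₐ[F] A)
    (h₁ : ∀ x : A, g (σ₁ x) = σ₁ (h x))
    (h₂ : ∀ x : A, g (σ₂ x) = σ₂ (h x))
    (h₃ : ∀ x : A, g (σ₃.symm x) = σ₃.symm (h x))
    (h₄ : ∀ x : A, g (σ₄.symm x) = σ₄.symm (h x))
    (b : A) (hb : IsUnit b) (hb_center : b ∈ Set.center A) (hbc : g c = σ₁ b * σ₂ b * c)
    (G : A × A → A × A) (hG : ∀ u v : A, G (u, v) = (g u, h v * b)) :
    Function.Bijective G ∧
    (∀ p q : A × A, G (p + q) = G p + G q) ∧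
    (∀ (α : F) (p : A × A), G (α • p) = α • G p) ∧
    (∀ p q : A × A, G (cayMul c σ₁ σ₂ σ₃ σ₄ p q) = cayMul c σ₁ σ₂ σ₃ σ₄ (G p) (G q)) := by
  obtain rfl : G = cayMap g.toLinearMap h.toLinearMap b := funext fun p => hG p.1 p.2
  have h₃' : Function.Semiconj σ₃ g h :=
    Function.Semiconj.inverse_left (fun x => (h₃ x).symm)
      σ₃.apply_symm_apply σ₃.symm_apply_apply
  have h₄' : Function.Semiconj σ₄ g h :=
    Function.Semiconj.inverse_left (fun x => (h₄ x).symm)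
      σ₄.apply_symm_apply σ₄.symm_apply_apply
  have apply_mem_center (σ : A ≃ₐ[F] A) : σ b ∈ Set.center A :=
    MulEquivClass.apply_mem_center σ hb_center
  refine ⟨cayMap_bijective g.bijective h.bijective hb, map_add _, map_smul _, ?_⟩
  exact cayMap_cayMul (g := g.toAlgHom) (h := h.toAlgHom)
    (τ₁ := (σ₁ : A →* A)) (τ₂ := (σ₂ : A →* A))
    h₁ h₂ (fun x => (h₃' x).symm) (fun x => (h₄' x).symm)
    hb_center (apply_mem_center σ₁) (apply_mem_center σ₂) hbc

/-- If `g, h ∈ Aut_F(K)` satisfy `g∘σᵢ = σᵢ∘h` (i = 1,2),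
`g∘σᵢ⁻¹ = σᵢ⁻¹∘h` (i = 3,4), and `b ≠ 0` satisfies `g(c) = σ₁(b)·σ₂(b)·c`, then
`G(u,v) = (g(u), h(v)·b)` is an `F`-algebra automorphism of `Cay(K,c,σ₁,σ₂,σ₃,σ₄)`. -/
theorem cay_field_automorphism_construction
    {F K : Type*} [Field F] [Field K] [Algebra F K] [FiniteDimensional F K]
    (σ₁ σ₂ σ₃ σ₄ : K ≃ₐ[F] K) (c : K) (hc : c ≠ 0)
    (g h : K ≃ₐ[F] K)
    (h1 : ∀ x : K, g (σ₁ x) = σ₁ (h x))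
    (h2 : ∀ x : K, g (σ₂ x) = σ₂ (h x))
    (h3 : ∀ x : K, g (σ₃.symm x) = σ₃.symm (h x))
    (h4 : ∀ x : K, g (σ₄.symm x) = σ₄.symm (h x))
    (b : K) (hb : b ≠ 0) (hbc : g c = σ₁ b * σ₂ b * c)
    (G : K × K → K × K) (hG : ∀ u v : K, G (u, v) = (g u, h v * b)) :
    Function.Bijective G ∧
    (∀ p q : K × K, G (p + q) = G p + G q) ∧
    (∀ (α : F) (p : K × K), G (α • p) = α • G p) ∧
    (∀ p q : K × K, G (cayMul c σ₁ σ₂ σ₃ σ₄ p q) = cayMul c σ₁ σ₂ σ₃ σ₄ (G p) (G q)) :=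
  cay_field_automorphism_construction_general σ₁ σ₂ σ₃ σ₄ c g h h1 h2 h3 h4 b hb.isUnit
    (Set.center_eq_univ K ▸ Set.mem_univ b) hbc G hG
end

section
/- Let G : D × D → D × D be an F-algebra automorphism of Cay(D,c,σ₁,σ₂,σ₃,σ₄) (bijective, F-linear, multiplicative) such that G(x,0) = (g(x),0) for all x ∈ D, where g is an F-algebra automorphism of D. Write G(0,1) = (a,b) with a, b ∈ D. Then b ≠ 0, and for all y ∈ D: a·g(σ₄⁻¹(y)) = g(σ₃⁻¹(y))·a and b·σ₄(g(σ₄⁻¹(y))) = σ₃(g(σ₃⁻¹(y)))·b. -/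
/-! An element of `D` passes through `(0,1)` up to a twist by `σ₃` and `σ₄`:
`(0,1)·(σ₄⁻¹(y),0) = (0,y) = (σ₃⁻¹(y),0)·(0,1)`. Applying `G` turns this into
`(a,b)·(g(σ₄⁻¹(y)),0) = (g(σ₃⁻¹(y)),0)·(a,b)`, whose two coordinates are the asserted identities.
If `b = 0`, then `(a,0) = G(g⁻¹(a),0)` would have the two preimages `(0,1)` and `(g⁻¹(a),0)`. -/

section cayMul

variable {R : Type*} [Ring R] {c : R} {σ₁ σ₂ σ₃ σ₄ : R → R}

theorem cayMul_mk_zero_right (h₂ : σ₂ 0 = 0) (p : R × R) (x : R) :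
    cayMul c σ₁ σ₂ σ₃ σ₄ p (x, 0) = (p.1 * x, p.2 * σ₄ x) := by
  simp [cayMul, h₂]

theorem cayMul_mk_zero_left (h₁ : σ₁ 0 = 0) (x : R) (p : R × R) :
    cayMul c σ₁ σ₂ σ₃ σ₄ (x, 0) p = (x * p.1, σ₃ x * p.2) := by
  simp [cayMul, h₁]

theorem cayMul_mk_zero_right_eq_mk_zero_left_iff (h₁ : σ₁ 0 = 0) (h₂ : σ₂ 0 = 0)
    {p : R × R} {x y : R} :
    cayMul c σ₁ σ₂ σ₃ σ₄ p (x, 0) = cayMul c σ₁ σ₂ σ₃ σ₄ (y, 0) p ↔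
      p.1 * x = y * p.1 ∧ p.2 * σ₄ x = σ₃ y * p.2 := by
  rw [cayMul_mk_zero_right h₂, cayMul_mk_zero_left h₁, Prod.mk_inj]

end cayMul

theorem snd_apply_ne_zero_of_injective {α β γ δ : Type*} [Zero β] [Zero δ]
    {G : α × β → γ × δ} (hG : Function.Injective G)
    {g : α → γ} (hg : Function.Surjective g) (hGg : ∀ x, G (x, 0) = (g x, 0))
    {p : α × β} (hp : p.2 ≠ 0) : (G p).2 ≠ 0 := by
  intro hGp
  obtain ⟨x, hx⟩ := hg (G p).1
  have hpx : G p = G (x, 0) := by rw [hGg, hx, ← hGp]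
  exact hp (congrArg Prod.snd (hG hpx))

theorem cay_central_division_algebra_automorphism_scalars_general
    {R : Type*} [Ring R] [Nontrivial R] {c : R}
    {σ₁ σ₂ : R → R} (h₁ : σ₁ 0 = 0) (h₂ : σ₂ 0 = 0) (σ₃ σ₄ : R ≃ R)
    {G : R × R → R × R} (hG : Function.Injective G)
    (hGmul : ∀ p q : R × R,
      G (cayMul c σ₁ σ₂ σ₃ σ₄ p q) = cayMul c σ₁ σ₂ σ₃ σ₄ (G p) (G q))
    {g : R → R} (hg : Function.Surjective g) (hGg : ∀ x : R, G (x, 0) = (g x, 0))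
    {a b : R} (hab : G (0, 1) = (a, b)) :
    b ≠ 0 ∧
    (∀ y : R, a * g (σ₄.symm y) = g (σ₃.symm y) * a) ∧
    (∀ y : R, b * σ₄ (g (σ₄.symm y)) = σ₃ (g (σ₃.symm y)) * b) := by
  have hb : b ≠ 0 := by
    simpa only [hab] using snd_apply_ne_zero_of_injective hG hg hGg (p := (0, 1)) one_ne_zero
  have hcomm (y : R) : cayMul c σ₁ σ₂ σ₃ σ₄ (0, 1) (σ₄.symm y, 0) =
      cayMul c σ₁ σ₂ σ₃ σ₄ (σ₃.symm y, 0) (0, 1) :=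
    (cayMul_mk_zero_right_eq_mk_zero_left_iff h₁ h₂).2 (by simp)
  have hGcomm (y : R) : cayMul c σ₁ σ₂ σ₃ σ₄ (a, b) (g (σ₄.symm y), 0) =
      cayMul c σ₁ σ₂ σ₃ σ₄ (g (σ₃.symm y), 0) (a, b) := by
    simpa only [hGmul, hGg, hab] using congrArg G (hcomm y)
  have hscalars (y : R) := (cayMul_mk_zero_right_eq_mk_zero_left_iff h₁ h₂).1 (hGcomm y)
  exact ⟨hb, fun y => (hscalars y).1, fun y => (hscalars y).2⟩

/-- If `G` is an `F`-algebra automorphism of `Cay(D,c,σ₁,σ₂,σ₃,σ₄)`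
restricting to `g ∈ Aut_F(D)` on `D`, and `G(0,1) = (a,b)`, then `b ≠ 0` and for
all `y ∈ D`: `a·g(σ₄⁻¹(y)) = g(σ₃⁻¹(y))·a` and `b·σ₄(g(σ₄⁻¹(y))) = σ₃(g(σ₃⁻¹(y)))·b`. -/
theorem cay_central_division_algebra_automorphism_scalars
    {F D : Type*} [Field F] [DivisionRing D] [Algebra F D]
    [FiniteDimensional F D] [Algebra.IsCentral F D]
    (σ₁ σ₂ σ₃ σ₄ : D ≃ₐ[F] D) (c : D) (hc : c ≠ 0)
    (G : D × D → D × D)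
    (hGbij : Function.Bijective G)
    (hGadd : ∀ p q : D × D, G (p + q) = G p + G q)
    (hGsmul : ∀ (α : F) (p : D × D), G (α • p) = α • G p)
    (hGmul : ∀ p q : D × D,
      G (cayMul c σ₁ σ₂ σ₃ σ₄ p q) = cayMul c σ₁ σ₂ σ₃ σ₄ (G p) (G q))
    (g : D ≃ₐ[F] D) (hGg : ∀ x : D, G (x, 0) = (g x, 0))
    (a b : D) (hab : G (0, 1) = (a, b)) :
    b ≠ 0 ∧
    (∀ y : D, a * g (σ₄.symm y) = g (σ₃.symm y) * a) ∧
    (∀ y : D, b * σ₄ (g (σ₄.symm y)) = σ₃ (g (σ₃.symm y)) * b) :=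
  cay_central_division_algebra_automorphism_scalars_general (map_zero σ₁) (map_zero σ₂)
    σ₃.toEquiv σ₄.toEquiv hGbij.injective hGmul g.surjective hGg hab
end
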